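/- Let Y = ΦX + E, where Φ ∈ ℂ^{M×N} has ΦΦ* invertible, X ∈ ℂ^{N×L} is s row-sparse, and E ∈ ℂ^{M×L}. Let W̃ ∈ ℂ^{N×L} be s̃ row-sparse, set X̃ = W̃ + Φ*(ΦΦ*)⁻¹(Y − ΦW̃), and suppose X̃ = QR with Q ∈ ℂ^{N×L} having orthonormal columns and R ∈ ℂ^{L×L} invertible with σ_max(R) ≤ α·σ_min(R), α ≥ 1. Let T ⊆ {1,…,N} with |T| = t ≥ s satisfy ‖Q_{i·}‖₂ ≥ ‖Q_{j·}‖₂ for all i ∈ T, j ∉ T, suppose Φ_T*Φ_T is invertible, and let W̄ be the feedback: W̄_(T^c) = 0, W̄_{(T)} = X̃_{(T)} + (Φ_T*Φ_T)⁻¹Φ_T*Φ_{T^c}X̃_{(T^c)}. Let δ < 1 be a restricted isometry constant of order s + s̃ + t for Φ, γ a preconditioned restricted isometry constant of order s + s̃ + t for Φ, and θ an upper restricted isometry constant of order s + t for (ΦΦ*)⁻¹Φ. Then ‖X − W̄‖_F ≤ √(2α²γ²/(1 − δ²)) · ‖X − W̃‖_F + (√(1+δ)/(1−δ) + √(2α²(1+θ))/√(1−δ²))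 · ‖E‖_F. -/

import Mathlib

open Matrix BigOperators

/-- Frobenius norm of a complex matrix. -/
noncomputable def frobNorm {m n : Type*} [Fintype m] [Fintype n] (A : Matrix m n ℂ) : ℝ :=
  Real.sqrt (∑ i, ∑ j, ‖A i j‖ ^ 2)

open scoped Classical in
/-- The row support of a matrix: indices of its nonzero rows. -/
noncomputable def rowSupp {N L : ℕ} (X : Matrix (Fin N) (Fin L) ℂ) : Finset (Fin N) :=
  Finset.univ.filter (fun i => X i ≠ 0)

/-- `X_(T)`: the matrix obtained from `X` by zeroing every row with index outside `T`. -/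
def rowRestrict {N L : ℕ} (T : Finset (Fin N)) (X : Matrix (Fin N) (Fin L) ℂ) :
    Matrix (Fin N) (Fin L) ℂ :=
  fun i j => if i ∈ T then X i j else 0

/-- Euclidean norm of a complex vector. -/
noncomputable def vecNorm {ι : Type*} [Fintype ι] (v : ι → ℂ) : ℝ :=
  Real.sqrt (∑ i, ‖v i‖ ^ 2)

/-- `Φ_T`: the submatrix of columns of `Φ` indexed by `T`. -/
def colSub {M N : ℕ} (Φ : Matrix (Fin M) (Fin N) ℂ) (T : Finset (Fin N)) :
    Matrix (Fin M) {x // x ∈ T} ℂ :=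
  fun i j => Φ i j.val

/-- `X_{(T)}`: the submatrix of rows of `X` indexed by `T`. -/
def rowSub {N L : ℕ} (T : Finset (Fin N)) (X : Matrix (Fin N) (Fin L) ℂ) :
    Matrix {x // x ∈ T} (Fin L) ℂ :=
  fun i j => X i.val j

/-- The set of values `‖R v‖` over unit vectors `v` (the "singular value range"). -/
noncomputable def sigmaSet {L : ℕ} (R : Matrix (Fin L) (Fin L) ℂ) : Set ℝ :=
  {c | ∃ v : Fin L → ℂ, vecNorm v = 1 ∧ c = vecNorm (R.mulVec v)}

/-- The largest singular value of `R`. -/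
noncomputable def sigmaMax {L : ℕ} (R : Matrix (Fin L) (Fin L) ℂ) : ℝ :=
  sSup (sigmaSet R)

/-- The smallest singular value of `R` (for invertible `R`). -/
noncomputable def sigmaMin {L : ℕ} (R : Matrix (Fin L) (Fin L) ℂ) : ℝ :=
  sInf (sigmaSet R)

/-- Spectral (operator) norm of a square complex matrix. -/
noncomputable def specNorm {ι : Type*} [Fintype ι] (A : Matrix ι ι ℂ) : ℝ :=
  sSup {c | ∃ v : ι → ℂ, vecNorm v = 1 ∧ c = vecNorm (A.mulVec v)}

/-- `δ` is a restricted isometry constant (RIC) of order `t` for `A`, relative to matrices with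
`L` columns: `(1-δ)‖Z‖_F² ≤ ‖AZ‖_F² ≤ (1+δ)‖Z‖_F²` for every `t` row-sparse `Z`. -/
def IsRIC {M N : ℕ} (L : ℕ) (A : Matrix (Fin M) (Fin N) ℂ) (t : ℕ) (δ : ℝ) : Prop :=
  ∀ Z : Matrix (Fin N) (Fin L) ℂ, (rowSupp Z).card ≤ t →
    (1 - δ) * frobNorm Z ^ 2 ≤ frobNorm (A * Z) ^ 2 ∧
      frobNorm (A * Z) ^ 2 ≤ (1 + δ) * frobNorm Z ^ 2

/-- `γ` is a preconditioned restricted isometry constant (P-RIC) of order `t` for `Φ`: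
`(1-γ)‖Z‖_F² ≤ Re tr((ΦZ)* (ΦΦ*)⁻¹ (ΦZ))` for every `t` row-sparse `Z`. -/
def IsPRIC {M N : ℕ} (L : ℕ) (Φ : Matrix (Fin M) (Fin N) ℂ) (t : ℕ) (γ : ℝ) : Prop :=
  ∀ Z : Matrix (Fin N) (Fin L) ℂ, (rowSupp Z).card ≤ t →
    (1 - γ) * frobNorm Z ^ 2 ≤ (Matrix.trace ((Φ * Z)ᴴ * ((Φ * Φᴴ)⁻¹ * (Φ * Z)))).re

/-- `θ` is an upper restricted isometry constant of order `t` for `A`: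
`‖AZ‖_F² ≤ (1+θ)‖Z‖_F²` for every `t` row-sparse `Z`. -/
def IsUpperRIC {M N : ℕ} (L : ℕ) (A : Matrix (Fin M) (Fin N) ℂ) (t : ℕ) (θ : ℝ) : Prop :=
  ∀ Z : Matrix (Fin N) (Fin L) ℂ, (rowSupp Z).card ≤ t →
    frobNorm (A * Z) ^ 2 ≤ (1 + θ) * frobNorm Z ^ 2

/-- The least-squares feedback of `X` on the index set `T`:
rows outside `T` are zero and on `T` it equals
`X_{(T)} + (Φ_T* Φ_T)⁻¹ Φ_T* Φ_{T^c} X_{(T^c)}`. -/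
noncomputable def feedback {M N L : ℕ} (Φ : Matrix (Fin M) (Fin N) ℂ) (T : Finset (Fin N))
    (X : Matrix (Fin N) (Fin L) ℂ) : Matrix (Fin N) (Fin L) ℂ :=
  fun i j =>
    if h : i ∈ T then
      (rowSub T X +
        ((colSub Φ T)ᴴ * colSub Φ T)⁻¹ * (colSub Φ T)ᴴ *
          (colSub Φ Tᶜ * rowSub Tᶜ X)) ⟨i, h⟩ j
    else 0

/-!
The feedback is the least-squares fit to `Φ X̃ = Φ X + E` among matrices supported on `T`, so its
residual is orthogonal to the range of `Φ_T`. With the RIC this bounds the rows of `X - W̄` in `T`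
by `δ ‖X - W̄‖ + √(1 + δ) ‖E‖`; its rows outside `T` are those of `X`, and Pythagoras gives
`‖X - W̄‖ ≤ √(1 + δ) ‖E‖ / (1 - δ) + ‖X_(Tᶜ)‖ / √(1 - δ²)`.

Since `R` is well conditioned, passing from the rows of `Q` to those of `X̃ = Q R` preserves the
selection of the largest rows up to the factor `α`. A row of `X` missed by `T` is thus paid for by a
row of `X̃` in `T` where `X` vanishes, so that `‖X_(Tᶜ)‖ ≤ √(1 + α²) ‖(X̃ - X)_(S ∪ T)‖` with
`S = supp X`.

Finally `X̃ - X = P (W̃ - X) + Φ* (Φ Φ*)⁻¹ E` with `P` the orthogonal projection onto `ker Φ`. The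
P-RIC says `‖P Z‖² ≤ γ ‖Z‖²` for row-sparse `Z`; for the restriction `V = (P Z)_(U)` to few rows the
constant improves from `√γ` to `γ`, because `‖V‖² = ⟪P Z, P V⟫` and the bound applies to both
factors.
-/

section RealInequalities

lemma le_of_sq_le_mul_self {a c : ℝ} (hc : 0 ≤ c) (h : a ^ 2 ≤ c * a) : a ≤ c := by
  by_contra! hca
  nlinarith

lemma le_sqrt_mul_of_sq_le {a b c : ℝ} (hb : 0 ≤ b) (h : a ^ 2 ≤ c * b ^ 2) : a ≤ √c * b := by
  calc a ≤ √(c * b ^ 2) := Real.le_sqrt_of_sq_le h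
    _ = √c * b := by rw [Real.sqrt_mul' c (sq_nonneg b), Real.sqrt_sq hb]

lemma le_div_add_div_sqrt_of_sq_le {δ a b c : ℝ} (h0 : -1 < δ) (h1 : δ < 1) (hb : 0 ≤ b)
    (hc : 0 ≤ c) (h : a ^ 2 ≤ (δ * a + c) ^ 2 + b ^ 2) :
    a ≤ c / (1 - δ) + b / √(1 - δ ^ 2) := by
  have hδ : 0 < 1 - δ := by linarith
  have hδ2 : 0 < 1 - δ ^ 2 := by nlinarith
  obtain ⟨w, hw⟩ : ∃ w, w = c / (1 - δ) := ⟨_, rfl⟩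
  have hw0 : 0 ≤ w := hw ▸ by positivity
  obtain rfl : c = w * (1 - δ) := by rw [hw, div_mul_cancel₀ _ hδ.ne']
  rw [← hw, ← sub_le_iff_le_add', le_div_iff₀ (Real.sqrt_pos.2 hδ2)]
  rcases le_total (a - w) 0 with hy | hy
  · exact (mul_nonpos_of_nonpos_of_nonneg hy (Real.sqrt_nonneg _)).trans hb
  · refine le_of_sq_le_sq ?_ hb
    rw [mul_pow, Real.sq_sqrt hδ2.le]
    have hcross : 0 ≤ w * (a - w) * (1 - δ) := by positivity
    nlinarith

end RealInequalities

lemma sum_le_sum_of_card_le_of_forall_le {ι κ M : Type*} [AddCommMonoid M] [LinearOrder M]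
    [IsOrderedAddMonoid M] {s : Finset ι} {t : Finset κ} {f : ι → M} {g : κ → M}
    (hcard : s.card ≤ t.card) (hg : ∀ j ∈ t, 0 ≤ g j) (hfg : ∀ i ∈ s, ∀ j ∈ t, f i ≤ g j) :
    ∑ i ∈ s, f i ≤ ∑ j ∈ t, g j := by
  rcases t.eq_empty_or_nonempty with rfl | ht
  · simp_all
  · obtain ⟨m, hm, hmin⟩ := t.exists_min_image g ht
    calc ∑ i ∈ s, f i ≤ s.card • g m := Finset.sum_le_card_nsmul s f _ fun i hi => hfg i hi m hm
      _ ≤ t.card • g m := nsmul_le_nsmul_left (hg m hm) hcard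
      _ ≤ ∑ j ∈ t, g j := Finset.card_nsmul_le_sum t g _ hmin

section InnerProductSpace

open scoped RealInnerProductSpace

lemma inner_sub_inner_map_le {E F : Type*} [NormedAddCommGroup E] [InnerProductSpace ℝ E]
    [NormedAddCommGroup F] [InnerProductSpace ℝ F] (f : E →ₗ[ℝ] F) (U : Submodule ℝ E) {δ : ℝ}
    (hlow : ∀ x ∈ U, (1 - δ) * ‖x‖ ^ 2 ≤ ‖f x‖ ^ 2)
    (hup : ∀ x ∈ U, ‖f x‖ ^ 2 ≤ (1 + δ) * ‖x‖ ^ 2) {x y : E} (hx : x ∈ U) (hy : y ∈ U) :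
    ⟪x, y⟫ - ⟪f x, f y⟫ ≤ δ * ‖x‖ * ‖y‖ := by
  rcases eq_or_ne x 0 with rfl | hx0
  · simp
  rcases eq_or_ne y 0 with rfl | hy0
  · simp
  -- Polarization, after rescaling `x` and `y` to the common norm `‖x‖ * ‖y‖`.
  have hu := hlow _ (U.add_mem (U.smul_mem ‖y‖ hx) (U.smul_mem ‖x‖ hy))
  have hv := hup _ (U.sub_mem (U.smul_mem ‖y‖ hx) (U.smul_mem ‖x‖ hy))
  simp only [map_add, map_sub, map_smul, norm_add_sq_real, norm_sub_sq_real, norm_smul, norm_norm,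
    real_inner_smul_left, real_inner_smul_right] at hu hv
  refine le_of_mul_le_mul_left ?_ (mul_pos (norm_pos_iff.2 hx0) (norm_pos_iff.2 hy0))
  nlinarith

lemma mul_norm_le_norm_adjoint {𝕜 E F : Type*} [RCLike 𝕜] [NormedAddCommGroup E]
    [InnerProductSpace 𝕜 E] [CompleteSpace E] [NormedAddCommGroup F] [InnerProductSpace 𝕜 F]
    [CompleteSpace F] {A : E →L[𝕜] F} (hA : Function.Surjective A) {c : ℝ} (hc : 0 ≤ c)
    (h : ∀ x, c * ‖x‖ ≤ ‖A x‖) (y : F) :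
    c * ‖y‖ ≤ ‖ContinuousLinearMap.adjoint A y‖ := by
  obtain ⟨x, rfl⟩ := hA y
  rcases eq_or_ne (A x) 0 with h0 | h0
  · simp [h0]
  refine le_of_mul_le_mul_right ?_ (norm_pos_iff.2 h0)
  calc c * ‖A x‖ * ‖A x‖ = c * RCLike.re (inner 𝕜 x (ContinuousLinearMap.adjoint A (A x))) := by
        rw [ContinuousLinearMap.adjoint_inner_right, inner_self_eq_norm_mul_norm, mul_assoc]
    _ ≤ c * (‖x‖ * ‖ContinuousLinearMap.adjoint A (A x)‖) := by
        gcongr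
        exact re_inner_le_norm _ _
    _ = c * ‖x‖ * ‖ContinuousLinearMap.adjoint A (A x)‖ := (mul_assoc _ _ _).symm
    _ ≤ ‖A x‖ * ‖ContinuousLinearMap.adjoint A (A x)‖ := by
        gcongr
        exact h x
    _ = ‖ContinuousLinearMap.adjoint A (A x)‖ * ‖A x‖ := mul_comm _ _

end InnerProductSpace

section SingularValues

variable {N L : ℕ}

lemma vecNorm_eq_norm {ι : Type*} [Fintype ι] (v : ι → ℂ) : vecNorm v = ‖WithLp.toLp 2 v‖ := by
  rw [vecNorm, EuclideanSpace.norm_eq]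

lemma vecNorm_star {ι : Type*} [Fintype ι] (v : ι → ℂ) : vecNorm (star v) = vecNorm v := by
  simp only [vecNorm, Pi.star_apply, norm_star]

lemma sigmaSet_eq_image (R : Matrix (Fin L) (Fin L) ℂ) :
    sigmaSet R = (fun x => ‖toEuclideanCLM (𝕜 := ℂ) R x‖) '' Metric.sphere 0 1 := by
  ext c
  simp only [sigmaSet, Set.mem_ofPred_eq, Set.mem_image, mem_sphere_zero_iff_norm, vecNorm_eq_norm]
  constructor
  · rintro ⟨v, hv, rfl⟩
    exact ⟨_, hv, rfl⟩
  · rintro ⟨x, hx, rfl⟩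
    exact ⟨x.ofLp, hx, rfl⟩

lemma sigmaMax_eq_norm (R : Matrix (Fin L) (Fin L) ℂ) :
    sigmaMax R = ‖toEuclideanCLM (𝕜 := ℂ) R‖ := by
  rw [sigmaMax, sigmaSet_eq_image, ContinuousLinearMap.sSup_sphere_eq_norm]

lemma sigmaMin_nonneg (R : Matrix (Fin L) (Fin L) ℂ) : 0 ≤ sigmaMin R := by
  rw [sigmaMin, sigmaSet_eq_image]
  refine Real.sInf_nonneg ?_
  rintro _ ⟨x, -, rfl⟩
  exact norm_nonneg _

lemma sigmaMin_mul_norm_le (R : Matrix (Fin L) (Fin L) ℂ) (x : EuclideanSpace ℂ (Fin L)) :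
    sigmaMin R * ‖x‖ ≤ ‖toEuclideanCLM (𝕜 := ℂ) R x‖ := by
  rcases eq_or_ne x 0 with rfl | hx
  · simp
  have hbdd : BddBelow (sigmaSet R) := by
    refine ⟨0, ?_⟩
    rintro _ ⟨v, -, rfl⟩
    exact Real.sqrt_nonneg _
  have hmem : ‖x‖⁻¹ * ‖toEuclideanCLM (𝕜 := ℂ) R x‖ ∈ sigmaSet R := by
    rw [sigmaSet_eq_image]
    exact ⟨(‖x‖⁻¹ : ℂ) • x, by simp [norm_smul, hx], by simp [norm_smul]⟩
  have h := csInf_le hbdd hmem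
  rwa [inv_mul_eq_div, le_div_iff₀ (norm_pos_iff.2 hx)] at h

lemma vecNorm_mul_row (Q : Matrix (Fin N) (Fin L) ℂ) (R : Matrix (Fin L) (Fin L) ℂ) (i : Fin N) :
    vecNorm ((Q * R) i) =
      ‖ContinuousLinearMap.adjoint (toEuclideanCLM (𝕜 := ℂ) R) (WithLp.toLp 2 (star (Q i)))‖ := by
  rw [← ContinuousLinearMap.star_eq_adjoint, ← map_star, toEuclideanCLM_toLp, ← vecNorm_eq_norm,
    star_eq_conjTranspose, ← star_vecMul, vecNorm_star]
  rfl

lemma vecNorm_mul_row_le_sigmaMax_mul (Q : Matrix (Fin N) (Fin L) ℂ)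
    (R : Matrix (Fin L) (Fin L) ℂ) (i : Fin N) :
    vecNorm ((Q * R) i) ≤ sigmaMax R * vecNorm (Q i) := by
  rw [vecNorm_mul_row, sigmaMax_eq_norm, ← vecNorm_star, vecNorm_eq_norm,
    ← LinearIsometryEquiv.norm_map ContinuousLinearMap.adjoint]
  exact ContinuousLinearMap.le_opNorm _ _

lemma sigmaMin_mul_le_vecNorm_mul_row (Q : Matrix (Fin N) (Fin L) ℂ)
    {R : Matrix (Fin L) (Fin L) ℂ} (hR : IsUnit R) (i : Fin N) :
    sigmaMin R * vecNorm (Q i) ≤ vecNorm ((Q * R) i) := by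
  have hsurj : Function.Surjective (toEuclideanCLM (𝕜 := ℂ) R) :=
    (ContinuousLinearMap.isUnit_iff_bijective.1 (hR.map (toEuclideanCLM (𝕜 := ℂ)))).2
  rw [vecNorm_mul_row, ← vecNorm_star, vecNorm_eq_norm]
  exact mul_norm_le_norm_adjoint hsurj (sigmaMin_nonneg R) (sigmaMin_mul_norm_le R) _

lemma vecNorm_mul_row_le_mul_of_sigmaMax_le {Q : Matrix (Fin N) (Fin L) ℂ}
    {R : Matrix (Fin L) (Fin L) ℂ} (hR : IsUnit R) {α : ℝ} (hα : 0 ≤ α)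
    (hσ : sigmaMax R ≤ α * sigmaMin R) {i j : Fin N} (hij : vecNorm (Q j) ≤ vecNorm (Q i)) :
    vecNorm ((Q * R) j) ≤ α * vecNorm ((Q * R) i) := by
  have hmin := sigmaMin_nonneg R
  calc vecNorm ((Q * R) j) ≤ sigmaMax R * vecNorm (Q j) := vecNorm_mul_row_le_sigmaMax_mul Q R j
    _ ≤ α * sigmaMin R * vecNorm (Q i) :=
        mul_le_mul hσ hij (Real.sqrt_nonneg _) (mul_nonneg hα hmin)
    _ = α * (sigmaMin R * vecNorm (Q i)) := mul_assoc _ _ _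
    _ ≤ α * vecNorm ((Q * R) i) :=
        mul_le_mul_of_nonneg_left (sigmaMin_mul_le_vecNorm_mul_row Q hR i) hα

end SingularValues

section Frobenius

open scoped Matrix.Norms.Frobenius RealInnerProductSpace

variable {l m n : Type*} [Fintype l] [Fintype m] [Fintype n]

lemma frobNorm_eq_norm (A : Matrix m n ℂ) : frobNorm A = ‖A‖ := by
  rw [frobenius_norm_def, frobNorm, Real.sqrt_eq_rpow]
  norm_cast

lemma frobNorm_sq_eq_sum (A : Matrix m n ℂ) : frobNorm A ^ 2 = ∑ i, vecNorm (A i) ^ 2 := by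
  simp only [frobNorm, vecNorm]
  rw [Real.sq_sqrt (by positivity)]
  exact Finset.sum_congr rfl fun i _ => (Real.sq_sqrt (by positivity)).symm

/-- The real Frobenius inner product `Re tr(A* B)` on complex matrices, inducing Mathlib's scoped
Frobenius norm. -/
noncomputable local instance frobeniusInnerProductSpace : InnerProductSpace ℝ (Matrix m n ℂ) where
  inner A B := (trace (Aᴴ * B)).re
  norm_sq_eq_re_inner A := by
    rw [← frobNorm_eq_norm, frobNorm, Real.sq_sqrt (by positivity), Finset.sum_comm]
    simp [trace, mul_apply, ← Complex.normSq_eq_norm_sq, Complex.normSq_apply]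
  conj_inner_symm A B := by
    rw [conj_trivial, ← Complex.conj_re, starRingEnd_apply, ← trace_conjTranspose,
      conjTranspose_mul, conjTranspose_conjTranspose]
  add_left A B C := by simp [Matrix.add_mul]
  smul_left A B r := by simp

lemma frobenius_inner_def (A B : Matrix m n ℂ) : ⟪A, B⟫ = (trace (Aᴴ * B)).re := rfl

lemma frobenius_inner_mul_left (C : Matrix l m ℂ) (A : Matrix m n ℂ) (B : Matrix l n ℂ) :
    ⟪C * A, B⟫ = ⟪A, Cᴴ * B⟫ := by
  rw [frobenius_inner_def, frobenius_inner_def, conjTranspose_mul, Matrix.mul_assoc]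

lemma frobenius_inner_mul_right (C : Matrix l m ℂ) (A : Matrix l n ℂ) (B : Matrix m n ℂ) :
    ⟪A, C * B⟫ = ⟪Cᴴ * A, B⟫ := by
  rw [frobenius_inner_mul_left, conjTranspose_conjTranspose]

lemma frobenius_inner_mul_mul_of_isStarProjection {P : Matrix m m ℂ} (hP : IsStarProjection P)
    (A B : Matrix m n ℂ) : ⟪P * A, P * B⟫ = ⟪P * A, B⟫ := by
  rw [frobenius_inner_mul_right, ← star_eq_conjTranspose, hP.isSelfAdjoint.star_eq,
    ← Matrix.mul_assoc, hP.isIdempotentElem.eq]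

end Frobenius

section Rows

open scoped Matrix.Norms.Frobenius RealInnerProductSpace
attribute [local instance] frobeniusInnerProductSpace

variable {M N L : ℕ}

/-- The matrices all of whose rows outside `U` vanish. -/
def rowSupported (L : ℕ) (U : Finset (Fin N)) : Submodule ℝ (Matrix (Fin N) (Fin L) ℂ) where
  carrier := {X | ∀ i ∉ U, X i = 0}
  zero_mem' _ _ := rfl
  add_mem' hX hY i hi := (congrArg₂ (· + ·) (hX i hi) (hY i hi)).trans (add_zero 0)
  smul_mem' c _ hX i hi := (congrArg (c • ·) (hX i hi)).trans (smul_zero c)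

lemma mem_rowSupported_iff {U : Finset (Fin N)} {X : Matrix (Fin N) (Fin L) ℂ} :
    X ∈ rowSupported L U ↔ rowSupp X ⊆ U := by
  simp only [rowSupp, Finset.subset_iff, Finset.mem_filter, Finset.mem_univ, true_and]
  exact forall_congr' fun i => not_imp_comm

lemma rowSupported_mono {U V : Finset (Fin N)} (h : U ⊆ V) :
    rowSupported L U ≤ rowSupported L V :=
  fun _ hX i hi => hX i fun hU => hi (h hU)

lemma rowRestrict_mem_rowSupported (T : Finset (Fin N)) (A : Matrix (Fin N) (Fin L) ℂ) :
    rowRestrict T A ∈ rowSupported L T :=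
  fun _ hi => funext fun _ => if_neg hi

lemma rowRestrict_eq_self_iff {T : Finset (Fin N)} {A : Matrix (Fin N) (Fin L) ℂ} :
    rowRestrict T A = A ↔ A ∈ rowSupported L T := by
  refine ⟨fun h => h ▸ rowRestrict_mem_rowSupported T A, fun h => ?_⟩
  ext i j
  by_cases hi : i ∈ T
  · exact if_pos hi
  · rw [h i hi]
    exact if_neg hi

lemma rowRestrict_add (T : Finset (Fin N)) (A B : Matrix (Fin N) (Fin L) ℂ) :
    rowRestrict T (A + B) = rowRestrict T A + rowRestrict T B := by
  ext i j
  simp only [rowRestrict, Matrix.add_apply]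
  split_ifs <;> simp

lemma rowRestrict_add_compl (T : Finset (Fin N)) (A : Matrix (Fin N) (Fin L) ℂ) :
    rowRestrict T A + rowRestrict Tᶜ A = A := by
  ext i j
  simp only [rowRestrict, Matrix.add_apply, Finset.mem_compl]
  split_ifs <;> simp_all

lemma norm_rowRestrict_sq (T : Finset (Fin N)) (A : Matrix (Fin N) (Fin L) ℂ) :
    ‖rowRestrict T A‖ ^ 2 = ∑ i ∈ T, vecNorm (A i) ^ 2 := by
  rw [← frobNorm_eq_norm, frobNorm_sq_eq_sum, ← Finset.sum_subset (Finset.subset_univ T)]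
  · exact Finset.sum_congr rfl fun i hi => by simp only [vecNorm, rowRestrict, if_pos hi]
  · intro i _ hi
    simp [vecNorm, rowRestrict, hi]

lemma norm_sq_eq_rowRestrict_add_compl (T : Finset (Fin N)) (A : Matrix (Fin N) (Fin L) ℂ) :
    ‖A‖ ^ 2 = ‖rowRestrict T A‖ ^ 2 + ‖rowRestrict Tᶜ A‖ ^ 2 := by
  rw [norm_rowRestrict_sq, norm_rowRestrict_sq, Finset.sum_add_sum_compl, ← frobNorm_sq_eq_sum,
    frobNorm_eq_norm]

lemma inner_rowRestrict_self (T : Finset (Fin N)) (A : Matrix (Fin N) (Fin L) ℂ) :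
    ⟪A, rowRestrict T A⟫ = ‖rowRestrict T A‖ ^ 2 := by
  have hsplit := norm_sq_eq_rowRestrict_add_compl T A
  nth_rw 1 [← rowRestrict_add_compl T A] at hsplit ⊢
  rw [norm_add_sq_real] at hsplit
  rw [inner_add_left, real_inner_self_eq_norm_sq, real_inner_comm]
  linarith

lemma mul_rowRestrict (Φ : Matrix (Fin M) (Fin N) ℂ) (T : Finset (Fin N))
    (A : Matrix (Fin N) (Fin L) ℂ) : Φ * rowRestrict T A = colSub Φ T * rowSub T A := by
  ext i j
  simp only [mul_apply, colSub, rowSub, rowRestrict, mul_ite, mul_zero]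
  rw [Finset.sum_ite_mem, Finset.univ_inter, Finset.univ_eq_attach,
    Finset.sum_attach T fun k => Φ i k * A k j]

end Rows

section KernelProjection

variable {m n : Type*} [Fintype m] [Fintype n] [DecidableEq m]

/-- The right inverse `Φ* (Φ Φ*)⁻¹` of a matrix `Φ` with `Φ Φ*` invertible (the Moore–Penrose
pseudoinverse of `Φ`). -/
noncomputable def rightInv (Φ : Matrix m n ℂ) : Matrix n m ℂ :=
  Φᴴ * (Φ * Φᴴ)⁻¹

lemma mul_rightInv {Φ : Matrix m n ℂ} (hinv : IsUnit (Φ * Φᴴ)) : Φ * rightInv Φ = 1 := by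
  rw [rightInv, ← Matrix.mul_assoc, mul_nonsing_inv _ ((isUnit_iff_isUnit_det _).1 hinv)]

lemma conjTranspose_rightInv (Φ : Matrix m n ℂ) : (rightInv Φ)ᴴ = (Φ * Φᴴ)⁻¹ * Φ := by
  rw [rightInv, conjTranspose_mul, conjTranspose_nonsing_inv, conjTranspose_mul,
    conjTranspose_conjTranspose]

variable [DecidableEq n]

/-- The orthogonal projection `1 - Φ* (Φ Φ*)⁻¹ Φ` onto the kernel of a matrix `Φ` with `Φ Φ*`
invertible. -/
noncomputable def kerProj (Φ : Matrix m n ℂ) : Matrix n n ℂ :=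
  1 - rightInv Φ * Φ

lemma isStarProjection_kerProj {Φ : Matrix m n ℂ} (hinv : IsUnit (Φ * Φᴴ)) :
    IsStarProjection (kerProj Φ) := by
  refine IsStarProjection.one_sub ⟨?_, ?_⟩
  · rw [IsIdempotentElem, Matrix.mul_assoc, ← Matrix.mul_assoc Φ, mul_rightInv hinv, Matrix.one_mul]
  · rw [IsSelfAdjoint, star_eq_conjTranspose, conjTranspose_mul, conjTranspose_rightInv, rightInv,
      Matrix.mul_assoc]

end KernelProjection

section RestrictedIsometry

open scoped Matrix.Norms.Frobenius RealInnerProductSpace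
attribute [local instance] frobeniusInnerProductSpace

variable {M N L k : ℕ} {Φ : Matrix (Fin M) (Fin N) ℂ} {U : Finset (Fin N)}

lemma card_rowSupp_le {X : Matrix (Fin N) (Fin L) ℂ} (hX : X ∈ rowSupported L U)
    (hU : U.card ≤ k) : (rowSupp X).card ≤ k :=
  (Finset.card_le_card (mem_rowSupported_iff.1 hX)).trans hU

lemma IsRIC.isUpperRIC {δ : ℝ} (h : IsRIC L Φ k δ) : IsUpperRIC L Φ k δ :=
  fun Z hZ => (h Z hZ).2

lemma IsRIC.inner_sub_inner_mul_le {δ : ℝ} (h : IsRIC L Φ k δ) (hU : U.card ≤ k)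
    {X Y : Matrix (Fin N) (Fin L) ℂ} (hX : X ∈ rowSupported L U) (hY : Y ∈ rowSupported L U) :
    ⟪X, Y⟫ - ⟪Φ * X, Φ * Y⟫ ≤ δ * ‖X‖ * ‖Y‖ := by
  have hRIC : ∀ Z ∈ rowSupported L U, (1 - δ) * ‖Z‖ ^ 2 ≤ ‖Φ * Z‖ ^ 2 ∧
      ‖Φ * Z‖ ^ 2 ≤ (1 + δ) * ‖Z‖ ^ 2 := fun Z hZ => by
    simpa only [frobNorm_eq_norm] using h Z (card_rowSupp_le hZ hU)
  exact inner_sub_inner_map_le (mulLeftLinearMap (Fin L) ℝ Φ) (rowSupported L U)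
    (fun Z hZ => (hRIC Z hZ).1) (fun Z hZ => (hRIC Z hZ).2) hX hY

lemma IsUpperRIC.norm_mul_le {θ : ℝ} (h : IsUpperRIC L Φ k θ) {Z : Matrix (Fin N) (Fin L) ℂ}
    (hZ : (rowSupp Z).card ≤ k) : ‖Φ * Z‖ ≤ √(1 + θ) * ‖Z‖ := by
  have hsq := h Z hZ
  simp only [frobNorm_eq_norm] at hsq
  exact le_sqrt_mul_of_sq_le (norm_nonneg Z) hsq

lemma IsUpperRIC.norm_rowRestrict_conjTranspose_mul_le {θ : ℝ} (h : IsUpperRIC L Φ k θ)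
    (hU : U.card ≤ k) (E : Matrix (Fin M) (Fin L) ℂ) :
    ‖rowRestrict U (Φᴴ * E)‖ ≤ √(1 + θ) * ‖E‖ := by
  set V := rowRestrict U (Φᴴ * E) with hV
  refine le_of_sq_le_mul_self (by positivity) ?_
  calc ‖V‖ ^ 2 = ⟪E, Φ * V⟫ := by rw [hV, ← inner_rowRestrict_self, frobenius_inner_mul_right]
    _ ≤ ‖E‖ * ‖Φ * V‖ := real_inner_le_norm _ _
    _ ≤ ‖E‖ * (√(1 + θ) * ‖V‖) := by
        gcongr
        exact h.norm_mul_le (card_rowSupp_le (rowRestrict_mem_rowSupported U _) hU)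
    _ = √(1 + θ) * ‖E‖ * ‖V‖ := by ring

lemma IsPRIC.norm_kerProj_mul_sq_le {γ : ℝ} (h : IsPRIC L Φ k γ) (hinv : IsUnit (Φ * Φᴴ))
    {Z : Matrix (Fin N) (Fin L) ℂ} (hZ : (rowSupp Z).card ≤ k) :
    ‖kerProj Φ * Z‖ ^ 2 ≤ γ * ‖Z‖ ^ 2 := by
  have hP : (1 - γ) * ‖Z‖ ^ 2 ≤ ⟪Φ * Z, (Φ * Φᴴ)⁻¹ * (Φ * Z)⟫ := by
    simpa only [frobNorm_eq_norm, frobenius_inner_def] using h Z hZ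
  have hadj : ⟪rightInv Φ * Φ * Z, Z⟫ = ⟪Φ * Z, (Φ * Φᴴ)⁻¹ * (Φ * Z)⟫ := by
    rw [Matrix.mul_assoc, frobenius_inner_mul_left, conjTranspose_rightInv, Matrix.mul_assoc]
  have hsq : ‖kerProj Φ * Z‖ ^ 2 = ‖Z‖ ^ 2 - ⟪Φ * Z, (Φ * Φᴴ)⁻¹ * (Φ * Z)⟫ := by
    rw [← real_inner_self_eq_norm_sq,
      frobenius_inner_mul_mul_of_isStarProjection (isStarProjection_kerProj hinv), kerProj,
      Matrix.sub_mul, Matrix.one_mul, inner_sub_left, real_inner_self_eq_norm_sq, hadj]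
  linarith

lemma IsPRIC.norm_rowRestrict_kerProj_mul_le {γ : ℝ} (h : IsPRIC L Φ k γ) (hγ : 0 ≤ γ)
    (hinv : IsUnit (Φ * Φᴴ)) (hU : U.card ≤ k) {Z : Matrix (Fin N) (Fin L) ℂ}
    (hZ : (rowSupp Z).card ≤ k) : ‖rowRestrict U (kerProj Φ * Z)‖ ≤ γ * ‖Z‖ := by
  set V := rowRestrict U (kerProj Φ * Z) with hV
  have hker : ∀ {W : Matrix (Fin N) (Fin L) ℂ}, (rowSupp W).card ≤ k →
      ‖kerProj Φ * W‖ ≤ √γ * ‖W‖ := fun hW =>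
    le_sqrt_mul_of_sq_le (norm_nonneg _) (h.norm_kerProj_mul_sq_le hinv hW)
  refine le_of_sq_le_mul_self (by positivity) ?_
  calc ‖V‖ ^ 2 = ⟪kerProj Φ * Z, kerProj Φ * V⟫ := by
        rw [frobenius_inner_mul_mul_of_isStarProjection (isStarProjection_kerProj hinv), hV,
          inner_rowRestrict_self]
    _ ≤ ‖kerProj Φ * Z‖ * ‖kerProj Φ * V‖ := real_inner_le_norm _ _
    _ ≤ √γ * ‖Z‖ * (√γ * ‖V‖) := by
        gcongr
        · exact hker hZ
        · exact hker (card_rowSupp_le (rowRestrict_mem_rowSupported U _) hU)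
    _ = √γ ^ 2 * ‖Z‖ * ‖V‖ := by ring
    _ = γ * ‖Z‖ * ‖V‖ := by rw [Real.sq_sqrt hγ]

end RestrictedIsometry

section Feedback

open scoped Matrix.Norms.Frobenius RealInnerProductSpace
attribute [local instance] frobeniusInnerProductSpace

variable {M N L k : ℕ} {Φ : Matrix (Fin M) (Fin N) ℂ} {T : Finset (Fin N)}

lemma feedback_mem_rowSupported (Φ : Matrix (Fin M) (Fin N) ℂ) (T : Finset (Fin N))
    (A : Matrix (Fin N) (Fin L) ℂ) : feedback Φ T A ∈ rowSupported L T :=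
  fun _ hi => funext fun _ => dif_neg hi

lemma mul_feedback (Φ : Matrix (Fin M) (Fin N) ℂ) (T : Finset (Fin N))
    (A : Matrix (Fin N) (Fin L) ℂ) :
    Φ * feedback Φ T A = Φ * rowRestrict T A + colSub Φ T *
      (((colSub Φ T)ᴴ * colSub Φ T)⁻¹ * ((colSub Φ T)ᴴ * (Φ * rowRestrict Tᶜ A))) := by
  have hrow : rowSub T (feedback Φ T A) = rowSub T A +
      ((colSub Φ T)ᴴ * colSub Φ T)⁻¹ * (colSub Φ T)ᴴ * (colSub Φ Tᶜ * rowSub Tᶜ A) :=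
    funext fun i => funext fun _ => dif_pos i.2
  rw [← rowRestrict_eq_self_iff.2 (feedback_mem_rowSupported Φ T A), mul_rowRestrict, hrow,
    Matrix.mul_add, mul_rowRestrict, mul_rowRestrict, Matrix.mul_assoc (_⁻¹)]

lemma conjTranspose_mul_sub_mul_feedback (hTinv : IsUnit ((colSub Φ T)ᴴ * colSub Φ T))
    (A : Matrix (Fin N) (Fin L) ℂ) :
    (colSub Φ T)ᴴ * (Φ * A - Φ * feedback Φ T A) = 0 := by
  have hdet := (isUnit_iff_isUnit_det _).1 hTinv
  nth_rw 1 [mul_feedback, ← rowRestrict_add_compl T A]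
  rw [Matrix.mul_add Φ, add_sub_add_left_eq_sub, Matrix.mul_sub, ← Matrix.mul_assoc _ (colSub Φ T),
    mul_nonsing_inv_cancel_left _ _ hdet, sub_self]

lemma inner_mul_rowRestrict_sub_mul_feedback (hTinv : IsUnit ((colSub Φ T)ᴴ * colSub Φ T))
    (A B : Matrix (Fin N) (Fin L) ℂ) :
    ⟪Φ * rowRestrict T B, Φ * A - Φ * feedback Φ T A⟫ = 0 := by
  rw [mul_rowRestrict, frobenius_inner_mul_left, conjTranspose_mul_sub_mul_feedback hTinv,
    inner_zero_right]

lemma IsRIC.norm_rowRestrict_sub_feedback_le {δ : ℝ} (h : IsRIC L Φ k δ) (hδ : 0 ≤ δ)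
    (hTinv : IsUnit ((colSub Φ T)ᴴ * colSub Φ T)) {X A : Matrix (Fin N) (Fin L) ℂ}
    {E : Matrix (Fin M) (Fin L) ℂ} (hA : Φ * A = Φ * X + E) (hk : (rowSupp X ∪ T).card ≤ k) :
    ‖rowRestrict T (X - feedback Φ T A)‖ ≤ δ * ‖X - feedback Φ T A‖ + √(1 + δ) * ‖E‖ := by
  set Z := X - feedback Φ T A with hZ
  set V := rowRestrict T Z with hV
  have hZmem : Z ∈ rowSupported L (rowSupp X ∪ T) :=
    Submodule.sub_mem _ (mem_rowSupported_iff.2 Finset.subset_union_left)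
      (rowSupported_mono Finset.subset_union_right (feedback_mem_rowSupported Φ T A))
  have hVmem : V ∈ rowSupported L (rowSupp X ∪ T) :=
    rowSupported_mono Finset.subset_union_right (rowRestrict_mem_rowSupported T Z)
  have hresid : Φ * A - Φ * feedback Φ T A = Φ * Z + E := by
    rw [hA, hZ, Matrix.mul_sub]
    abel
  have hortho : ⟪Φ * V, Φ * Z⟫ + ⟪Φ * V, E⟫ = 0 := by
    rw [← inner_add_right, ← hresid, hV, inner_mul_rowRestrict_sub_mul_feedback hTinv]
  have hnoise : -⟪Φ * V, E⟫ ≤ √(1 + δ) * ‖V‖ * ‖E‖ :=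
    calc -⟪Φ * V, E⟫ ≤ ‖Φ * V‖ * ‖E‖ := (neg_le_abs _).trans (abs_real_inner_le_norm _ _)
      _ ≤ √(1 + δ) * ‖V‖ * ‖E‖ := by
          gcongr
          exact h.isUpperRIC.norm_mul_le (card_rowSupp_le hVmem hk)
  refine le_of_sq_le_mul_self (by positivity) ?_
  have hbilin := h.inner_sub_inner_mul_le hk hZmem hVmem
  rw [hV, inner_rowRestrict_self, ← hV, real_inner_comm] at hbilin
  linarith

lemma IsRIC.norm_sub_feedback_le {δ : ℝ} (h : IsRIC L Φ k δ) (hδ0 : 0 ≤ δ) (hδ1 : δ < 1)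
    (hTinv : IsUnit ((colSub Φ T)ᴴ * colSub Φ T)) {X A : Matrix (Fin N) (Fin L) ℂ}
    {E : Matrix (Fin M) (Fin L) ℂ} (hA : Φ * A = Φ * X + E) (hk : (rowSupp X ∪ T).card ≤ k) :
    ‖X - feedback Φ T A‖ ≤
      √(1 + δ) * ‖E‖ / (1 - δ) + ‖rowRestrict Tᶜ X‖ / √(1 - δ ^ 2) := by
  have hcompl : rowRestrict Tᶜ (X - feedback Φ T A) = rowRestrict Tᶜ X := by
    ext i j
    by_cases hi : i ∈ T <;> simp [rowRestrict, feedback, hi]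
  refine le_div_add_div_sqrt_of_sq_le (by linarith) hδ1 (norm_nonneg _) (by positivity) ?_
  rw [norm_sq_eq_rowRestrict_add_compl T, hcompl]
  gcongr
  exact h.norm_rowRestrict_sub_feedback_le hδ0 hTinv hA hk

end Feedback

section Thresholding

open scoped Matrix.Norms.Frobenius

variable {N L : ℕ} {S T : Finset (Fin N)} {X A : Matrix (Fin N) (Fin L) ℂ}

lemma norm_rowRestrict_sdiff_le {α : ℝ} (hα : 0 ≤ α) (hcard : S.card ≤ T.card)
    (hT : ∀ i ∈ T, ∀ j ∉ T, vecNorm (A j) ≤ α * vecNorm (A i)) :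
    ‖rowRestrict (S \ T) A‖ ≤ α * ‖rowRestrict (T \ S) A‖ := by
  refine le_of_sq_le_sq ?_ (by positivity)
  rw [mul_pow, norm_rowRestrict_sq, norm_rowRestrict_sq, Finset.mul_sum]
  refine sum_le_sum_of_card_le_of_forall_le (Finset.card_sdiff_le_card_sdiff_iff.2 hcard)
    (fun i _ => by positivity) fun j hj i hi => ?_
  rw [← mul_pow]
  exact pow_le_pow_left₀ (Real.sqrt_nonneg _)
    (hT i (Finset.mem_sdiff.1 hi).1 j (Finset.mem_sdiff.1 hj).2) 2

lemma norm_rowRestrict_sdiff_sq_add_le (S T : Finset (Fin N)) (A : Matrix (Fin N) (Fin L) ℂ) :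
    ‖rowRestrict (S \ T) A‖ ^ 2 + ‖rowRestrict (T \ S) A‖ ^ 2 ≤ ‖rowRestrict (S ∪ T) A‖ ^ 2 := by
  simp only [norm_rowRestrict_sq]
  rw [← Finset.sum_union disjoint_sdiff_sdiff]
  exact Finset.sum_le_sum_of_subset_of_nonneg
    (Finset.union_subset_union Finset.sdiff_subset Finset.sdiff_subset) fun _ _ _ => sq_nonneg _

lemma norm_rowRestrict_compl_le {α : ℝ} (hα : 0 ≤ α) (hX : X ∈ rowSupported L S)
    (hcard : S.card ≤ T.card) (hT : ∀ i ∈ T, ∀ j ∉ T, vecNorm (A j) ≤ α * vecNorm (A i)) :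
    ‖rowRestrict Tᶜ X‖ ≤ √(1 + α ^ 2) * ‖rowRestrict (S ∪ T) (A - X)‖ := by
  have hmissed : rowRestrict Tᶜ X = rowRestrict (S \ T) A - rowRestrict (S \ T) (A - X) := by
    ext i j
    by_cases hS : i ∈ S <;> by_cases hiT : i ∈ T <;> simp [rowRestrict, hS, hiT, hX i]
  have hspurious : rowRestrict (T \ S) A = rowRestrict (T \ S) (A - X) := by
    ext i j
    by_cases hS : i ∈ S <;> simp [rowRestrict, hS, hX i]
  set u := ‖rowRestrict (T \ S) (A - X)‖
  set r := ‖rowRestrict (S \ T) (A - X)‖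
  have hle : ‖rowRestrict Tᶜ X‖ ≤ α * u + r := by
    rw [hmissed]
    refine (norm_sub_le _ _).trans (add_le_add_left ?_ r)
    exact (norm_rowRestrict_sdiff_le hα hcard hT).trans_eq (by rw [hspurious])
  refine le_sqrt_mul_of_sq_le (norm_nonneg _) ?_
  calc ‖rowRestrict Tᶜ X‖ ^ 2 ≤ (α * u + r) ^ 2 := by gcongr
    _ ≤ (1 + α ^ 2) * (r ^ 2 + u ^ 2) := by linarith [sq_nonneg (α * r - u)]
    _ ≤ (1 + α ^ 2) * ‖rowRestrict (S ∪ T) (A - X)‖ ^ 2 := by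
        gcongr
        exact norm_rowRestrict_sdiff_sq_add_le S T (A - X)

end Thresholding

section Iteration

open scoped Matrix.Norms.Frobenius

variable {M N L k r : ℕ} {Φ : Matrix (Fin M) (Fin N) ℂ}

lemma mul_add_rightInv_mul_sub (hinv : IsUnit (Φ * Φᴴ)) (W : Matrix (Fin N) (Fin L) ℂ)
    (Y : Matrix (Fin M) (Fin L) ℂ) : Φ * (W + rightInv Φ * (Y - Φ * W)) = Y := by
  rw [Matrix.mul_add, ← Matrix.mul_assoc, mul_rightInv hinv, Matrix.one_mul, add_sub_cancel]

lemma add_rightInv_mul_sub_sub (Φ : Matrix (Fin M) (Fin N) ℂ) (X W : Matrix (Fin N) (Fin L) ℂ)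
    (E : Matrix (Fin M) (Fin L) ℂ) :
    W + rightInv Φ * (Φ * X + E - Φ * W) - X = kerProj Φ * (W - X) + rightInv Φ * E := by
  simp only [kerProj, Matrix.sub_mul, Matrix.one_mul, Matrix.mul_sub, Matrix.mul_add,
    Matrix.mul_assoc]
  abel

lemma norm_rowRestrict_add_rightInv_mul_sub_sub_le {γ θ : ℝ} (hinv : IsUnit (Φ * Φᴴ))
    (hγ : 0 ≤ γ) (hPRIC : IsPRIC L Φ k γ) (hURIC : IsUpperRIC L ((Φ * Φᴴ)⁻¹ * Φ) r θ)
    {X W : Matrix (Fin N) (Fin L) ℂ} (E : Matrix (Fin M) (Fin L) ℂ) {U : Finset (Fin N)}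
    (hXW : (rowSupp X ∪ rowSupp W).card ≤ k) (hUk : U.card ≤ k) (hUr : U.card ≤ r) :
    ‖rowRestrict U (W + rightInv Φ * (Φ * X + E - Φ * W) - X)‖ ≤
      γ * ‖X - W‖ + √(1 + θ) * ‖E‖ := by
  have hmem : W - X ∈ rowSupported L (rowSupp X ∪ rowSupp W) :=
    Submodule.sub_mem _ (mem_rowSupported_iff.2 Finset.subset_union_right)
      (mem_rowSupported_iff.2 Finset.subset_union_left)
  rw [add_rightInv_mul_sub_sub, rowRestrict_add, norm_sub_rev X W]
  refine (norm_add_le _ _).trans (add_le_add ?_ ?_)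
  · exact hPRIC.norm_rowRestrict_kerProj_mul_le hγ hinv hUk (card_rowSupp_le hmem hXW)
  · rw [← conjTranspose_conjTranspose (rightInv Φ), conjTranspose_rightInv]
    exact hURIC.norm_rowRestrict_conjTranspose_mul_le hUr E

theorem stmt12_general {M N L s s' t : ℕ} {Φ : Matrix (Fin M) (Fin N) ℂ}
    (hinv : IsUnit (Φ * Φᴴ)) {X W' : Matrix (Fin N) (Fin L) ℂ} {E Y : Matrix (Fin M) (Fin L) ℂ}
    (hY : Y = Φ * X + E) (hXs : (rowSupp X).card ≤ s) (hWs : (rowSupp W').card ≤ s')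
    {Xt : Matrix (Fin N) (Fin L) ℂ} (hXt : Xt = W' + Φᴴ * ((Φ * Φᴴ)⁻¹ * (Y - Φ * W')))
    {α : ℝ} (hα : 0 ≤ α) {T : Finset (Fin N)} (hTcard : T.card = t) (hts : s ≤ t)
    (hT : ∀ i ∈ T, ∀ j ∉ T, vecNorm (Xt j) ≤ α * vecNorm (Xt i))
    (hTinv : IsUnit ((colSub Φ T)ᴴ * colSub Φ T))
    {δ γ θ : ℝ} (hδ0 : 0 ≤ δ) (hδ1 : δ < 1) (hγ : 0 ≤ γ)
    (hRIC : IsRIC L Φ (s + s' + t) δ) (hPRIC : IsPRIC L Φ (s + s' + t) γ)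
    (hURIC : IsUpperRIC L ((Φ * Φᴴ)⁻¹ * Φ) (s + t) θ) :
    frobNorm (X - feedback Φ T Xt) ≤
      √((1 + α ^ 2) * γ ^ 2 / (1 - δ ^ 2)) * frobNorm (X - W') +
        (√(1 + δ) / (1 - δ) + √((1 + α ^ 2) * (1 + θ)) / √(1 - δ ^ 2)) * frobNorm E := by
  rw [← Matrix.mul_assoc, hY] at hXt
  change Xt = W' + rightInv Φ * (Φ * X + E - Φ * W') at hXt
  have hXT := (rowSupp X).card_union_le T
  have hXW := (rowSupp X).card_union_le (rowSupp W')
  have hfeedback := hRIC.norm_sub_feedback_le hδ0 hδ1 hTinv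
    (hXt ▸ mul_add_rightInv_mul_sub hinv W' (Φ * X + E)) (by omega)
  have hthreshold := norm_rowRestrict_compl_le hα
    (mem_rowSupported_iff.2 (Finset.Subset.refl (rowSupp X))) (by omega) hT
  have hresid := norm_rowRestrict_add_rightInv_mul_sub_sub_le hinv hγ hPRIC hURIC E
    (show (rowSupp X ∪ rowSupp W').card ≤ _ by omega)
    (show (rowSupp X ∪ T).card ≤ _ by omega) (by omega)
  rw [← hXt] at hresid
  simp only [frobNorm_eq_norm]
  calc ‖X - feedback Φ T Xt‖
      ≤ √(1 + δ) * ‖E‖ / (1 - δ) + ‖rowRestrict Tᶜ X‖ / √(1 - δ ^ 2) := hfeedback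
    _ ≤ √(1 + δ) * ‖E‖ / (1 - δ) +
          √(1 + α ^ 2) * (γ * ‖X - W'‖ + √(1 + θ) * ‖E‖) / √(1 - δ ^ 2) := by
        gcongr
        exact hthreshold.trans (by gcongr)
    _ = _ := by
        rw [Real.sqrt_div (by positivity), Real.sqrt_mul (by positivity),
          Real.sqrt_mul (by positivity), Real.sqrt_sq hγ]
        ring

end Iteration

/-- one-step contraction estimate of the OSNST+HT+f-FB iteration. -/
theorem stmt12 {M N L s s' t : ℕ} (Φ : Matrix (Fin M) (Fin N) ℂ) (hinv : IsUnit (Φ * Φᴴ))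
    (X W' : Matrix (Fin N) (Fin L) ℂ) (E : Matrix (Fin M) (Fin L) ℂ)
    (Y : Matrix (Fin M) (Fin L) ℂ) (hY : Y = Φ * X + E)
    (hXs : (rowSupp X).card ≤ s) (hWs : (rowSupp W').card ≤ s')
    (Xt : Matrix (Fin N) (Fin L) ℂ) (hXt : Xt = W' + Φᴴ * ((Φ * Φᴴ)⁻¹ * (Y - Φ * W')))
    (Q : Matrix (Fin N) (Fin L) ℂ) (R : Matrix (Fin L) (Fin L) ℂ)
    (hQ : Qᴴ * Q = 1) (hR : IsUnit R) (hQR : Xt = Q * R)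
    (α : ℝ) (hα : 1 ≤ α) (hσ : sigmaMax R ≤ α * sigmaMin R)
    (T : Finset (Fin N)) (hTcard : T.card = t) (hts : s ≤ t)
    (hT : ∀ i ∈ T, ∀ j ∉ T, vecNorm (Q j) ≤ vecNorm (Q i))
    (hTinv : IsUnit ((colSub Φ T)ᴴ * colSub Φ T))
    (δ γ θ : ℝ) (hδ0 : 0 ≤ δ) (hδ1 : δ < 1) (hγ : 0 ≤ γ) (hθ : 0 ≤ θ)
    (hRIC : IsRIC L Φ (s + s' + t) δ)
    (hPRIC : IsPRIC L Φ (s + s' + t) γ)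
    (hURIC : IsUpperRIC L ((Φ * Φᴴ)⁻¹ * Φ) (s + t) θ) :
    frobNorm (X - feedback Φ T Xt) ≤
      Real.sqrt (2 * α ^ 2 * γ ^ 2 / (1 - δ ^ 2)) * frobNorm (X - W') +
        (Real.sqrt (1 + δ) / (1 - δ) +
          Real.sqrt (2 * α ^ 2 * (1 + θ)) / Real.sqrt (1 - δ ^ 2)) * frobNorm E := by
  have hδ : 0 ≤ 1 - δ ^ 2 := by nlinarith
  have hα2 : 1 + α ^ 2 ≤ 2 * α ^ 2 := by nlinarith
  have hrows : ∀ i ∈ T, ∀ j ∉ T, vecNorm (Xt j) ≤ α * vecNorm (Xt i) := fun i hi j hj =>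
    hQR ▸ vecNorm_mul_row_le_mul_of_sigmaMax_le hR (by linarith) hσ (hT i hi j hj)
  refine (stmt12_general hinv hY hXs hWs hXt (by linarith) hTcard hts hrows hTinv hδ0 hδ1 hγ
    hRIC hPRIC hURIC).trans ?_
  gcongr <;> exact Real.sqrt_nonneg _
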